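/- Suppose F satisfies (G1) and the Perron–Frobenius operator P_σ of the base shift has spectral gap on d_θ-Lipschitz functions with constants D > 0, r ∈ (0,1). Then, with β₁ = max{√α, √r} and D₂ = (1 + D/(1−α))/β₁, for every signed measure μ ∈ V = {μ ∈ S^∞ : ∫ φ₁ dm = 0} and every n ≥ 1, ‖F^{*n}μ‖_∞ ≤ D₂ β₁^n ‖μ‖_{S^∞} (exponential convergence to equilibrium). -/

import Mathlib

open MeasureTheory ENNReal Set

namespace RDS

/-- The one-sided subshift of finite type `Σ_A^+` determined by the 0-1 matrix `A`. -/
abbrev SigmaA (N : ℕ) (A : Fin N → Fin N → Bool) :=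
  {x : ℕ → Fin N // ∀ i, A (x i) (x (i + 1)) = true}

variable {N : ℕ} {A : Fin N → Fin N → Bool}

/-- The shift map `σ` on `Σ_A^+`. -/
def shift (x : SigmaA N A) : SigmaA N A :=
  ⟨fun i => x.val (i + 1), fun i => x.prop (i + 1)⟩

/-- Aperiodicity of a 0-1 matrix: some power has all entries positive. -/
def Aperiodic (A : Fin N → Fin N → Bool) : Prop :=
  ∃ k : ℕ, 0 < k ∧ ∀ i j,
    0 < ((Matrix.of fun a b => if A a b then (1 : ℕ) else 0) ^ k) i j

/-- The metric `d_θ(x,y) = Σ_i θ^i (1 - δ(x_i, y_i))` on `Σ_A^+`. -/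
noncomputable def dTheta (θ : ℝ) (x y : SigmaA N A) : ℝ :=
  ∑' i : ℕ, θ ^ i * (if x.val i = y.val i then (0 : ℝ) else 1)

/-- Cylinder sets of `Σ_A^+`. -/
def cylinder (n : ℕ) (w : Fin (n + 1) → Fin N) : Set (SigmaA N A) :=
  {x | ∀ i : Fin (n + 1), x.val i = w i}

/-- `m` is a Markov measure on `Σ_A^+` compatible with `A`: it is given on
cylinders by a stochastic matrix `P` (vanishing where `A` vanishes) and a
stationary probability vector `p`. -/
def IsMarkov (m : Measure (SigmaA N A)) : Prop :=
  ∃ (p : Fin N → ℝ≥0∞) (P : Fin N → Fin N → ℝ≥0∞),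
    (∑ i, p i = 1) ∧ (∀ i, ∑ j, P i j = 1) ∧ (∀ j, ∑ i, p i * P i j = p j) ∧
    (∀ i j, A i j = false → P i j = 0) ∧
    ∀ (n : ℕ) (w : Fin (n + 1) → Fin N),
      m (cylinder n w) = p (w 0) * ∏ i : Fin n, P (w i.castSucc) (w i.succ)

/-- `σ_i⁻¹(γ)`: the sequence `γ` with the symbol `i` prepended
(defined when `A i γ₀ = 1`), i.e. the inverse branch of the restriction `σ_i`
of `σ` to the cylinder `[i]`. -/
def prepend (i : Fin N) (x : SigmaA N A) (h : A i (x.val 0) = true) : SigmaA N A :=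
  ⟨fun n => match n with
    | 0 => i
    | Nat.succ k => x.val k,
   fun j => match j with
    | 0 => h
    | Nat.succ k => x.prop k⟩

/-- `f` is `L`-Lipschitz with respect to the distance function `d`. -/
def LipWithD {X : Type*} (d : X → X → ℝ) (L : ℝ) (f : X → ℝ) : Prop :=
  ∀ x y, |f x - f y| ≤ L * d x y

/-- `f` is Lipschitz with respect to the distance function `d`. -/
def LipD {X : Type*} (d : X → X → ℝ) (f : X → ℝ) : Prop :=
  ∃ L : ℝ, LipWithD d L f

/-- The best Lipschitz constant of `f` with respect to `d` (valued in `ℝ≥0∞`). -/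
noncomputable def lipConst {X : Type*} (d : X → X → ℝ) (f : X → ℝ) : ℝ≥0∞ :=
  ⨆ (x : X) (y : X), ENNReal.ofReal (|f x - f y| / d x y)

/-- The sup norm of `f` (valued in `ℝ≥0∞`). -/
noncomputable def supNormE {X : Type*} (f : X → ℝ) : ℝ≥0∞ :=
  ⨆ x : X, ENNReal.ofReal |f x|

/-- The norm `‖f‖_θ = ‖f‖_∞ + Lip_d(f)`. -/
noncomputable def thetaNorm {X : Type*} (d : X → X → ℝ) (f : X → ℝ) : ℝ≥0∞ :=
  supNormE f + lipConst d f

/-- The Perron-Frobenius operator duality characterizing `P_σ`: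
`∫ P_σ(φ) · ψ dm = ∫ φ · (ψ ∘ σ) dm` for integrable `φ` and bounded measurable `ψ`. -/
def IsPerronFrobenius (m : Measure (SigmaA N A))
    (Pσ : (SigmaA N A → ℝ) → SigmaA N A → ℝ) : Prop :=
  ∀ φ ψ : SigmaA N A → ℝ, Integrable φ m → Measurable ψ → (∃ C, ∀ x, |ψ x| ≤ C) →
    ∫ x, Pσ φ x * ψ x ∂m = ∫ x, φ x * ψ (shift x) ∂m

/-- Spectral gap for `P_σ` on `d_θ`-Lipschitz functions with constants `D`, `r`:
`‖P_σ^n φ‖_θ ≤ D r^n ‖φ‖_θ` for all `n` and all `d_θ`-Lipschitz `φ` with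
`∫ φ dm = 0`. -/
def HasGap (m : Measure (SigmaA N A)) (θ : ℝ)
    (Pσ : (SigmaA N A → ℝ) → SigmaA N A → ℝ) (D r : ℝ) : Prop :=
  ∀ φ : SigmaA N A → ℝ, LipD (dTheta θ) φ → (∫ x, φ x ∂m) = 0 →
    ∀ n : ℕ, thetaNorm (dTheta θ) (Pσ^[n] φ) ≤
      ENNReal.ofReal (D * r ^ n) * thetaNorm (dTheta θ) φ

/-- `Jm i` is the Jacobian `J_{m,σ_i}` of `m` with respect to the branch `σ_i`
(the restriction of `σ` to the cylinder `[i]`): `m (σ_i(E)) = ∫_E J_{m,σ_i} dm`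
for every measurable `E` (intersected with `[i]`). -/
def IsJacobian (m : Measure (SigmaA N A)) (Jm : Fin N → SigmaA N A → ℝ) : Prop :=
  ∀ (i : Fin N) (E : Set (SigmaA N A)), MeasurableSet E →
    m {γ : SigmaA N A | ∃ h : A i (γ.val 0) = true, prepend i γ h ∈ E} =
      ∫⁻ x in E ∩ {x : SigmaA N A | x.val 0 = i}, ENNReal.ofReal (Jm i x) ∂m

variable {K : Type*} [MetricSpace K] [MeasurableSpace K]

/-- The Wasserstein-Kantorovich like distance `W(ν₁,ν₂)`: the supremum of
`|∫ g dν₁ - ∫ g dν₂|` over `g : K → ℝ` with `Lip(g) ≤ 1` and `‖g‖_∞ ≤ 1`.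
Applied with `ν₂ = 0` it gives the norm `‖ν₁‖_W`; applied to the two parts of a
decomposition of a signed measure it gives its `‖·‖_W` norm. -/
noncomputable def wDist (ν₁ ν₂ : Measure K) : ℝ≥0∞ :=
  ⨆ g : {g : K → ℝ // LipschitzWith 1 g ∧ ∀ z, |g z| ≤ 1},
    ENNReal.ofReal |∫ z, g.val z ∂ν₁ - ∫ z, g.val z ∂ν₂|

/-- The skew product `F(x,z) = (σ(x), G(x,z))`. -/
def skew (G : SigmaA N A × K → K) (p : SigmaA N A × K) : SigmaA N A × K :=
  (shift p.1, G p)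

/-- The transfer operator `F^* μ (E) = μ (F⁻¹ E)` acting on signed measures. -/
noncomputable def transfer (G : SigmaA N A × K → K)
    (μ : SignedMeasure (SigmaA N A × K)) : SignedMeasure (SigmaA N A × K) :=
  μ.map (skew G)

/-- Condition (G1): uniform contraction of the vertical fibers with rate `α`. -/
def CondG1 (G : SigmaA N A × K → K) (α : ℝ) : Prop :=
  ∀ (x : SigmaA N A) (z₁ z₂ : K), dist (G (x, z₁)) (G (x, z₂)) ≤ α * dist z₁ z₂

/-- Condition (G2): `x ↦ G(x,z)` is `d_θ`-Lipschitz with constant `H`,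
uniformly in `z`. -/
def CondG2 (θ : ℝ) (G : SigmaA N A × K → K) (H : ℝ) : Prop :=
  ∀ (z : K) (x y : SigmaA N A), dist (G (x, z)) (G (y, z)) ≤ H * dTheta θ x y

/-- `T` is (the path `γ ↦ μ|_γ` of) a disintegration of `μ` along the vertical
fibers, over the reference measure `m`: `μ(E) = ∫ (μ|_γ)(E ∩ γ) dm(γ)`. -/
def IsDisint (m : Measure (SigmaA N A)) (μ : Measure (SigmaA N A × K))
    (T : SigmaA N A → Measure K) : Prop :=
  (∀ E : Set (SigmaA N A × K), MeasurableSet E →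
      μ E = ∫⁻ γ, T γ {z | (γ, z) ∈ E} ∂m) ∧
  ∀ E : Set K, MeasurableSet E → Measurable fun γ => T γ E

/-- The (essential) `‖·‖_W`-Lipschitz constant of a path of measures,
`|Γ|_θ^ω = ess sup_{γ₁ ≠ γ₂} ‖Γ(γ₁) - Γ(γ₂)‖_W / d_θ(γ₁,γ₂)`. -/
noncomputable def pathLip (m : Measure (SigmaA N A)) (θ : ℝ)
    (T : SigmaA N A → Measure K) : ℝ≥0∞ :=
  essSup (fun p : SigmaA N A × SigmaA N A =>
    wDist (T p.1) (T p.2) / ENNReal.ofReal (dTheta θ p.1 p.2)) (m.prod m)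

/-- The Lipschitz constant `|μ|_θ` of a positive measure: the infimum over
disintegrations `ω` of `μ` of `|μ|_θ^ω`. -/
noncomputable def lipDisint (m : Measure (SigmaA N A)) (θ : ℝ)
    (μ : Measure (SigmaA N A × K)) : ℝ≥0∞ :=
  ⨅ T : {T : SigmaA N A → Measure K // IsDisint m μ T}, pathLip m θ T.val

/-- The fiberwise transfer formula: the path representing `F^*μ` induced by the
path `T` representing `μ`, i.e.
`γ ↦ Σ_i 1_{σ([i])}(γ) (F_{iγ})_*(T(iγ)) / J_{m,σ_i}(iγ)`. -/
noncomputable def transferPath (G : SigmaA N A × K → K) (Jm : Fin N → SigmaA N A → ℝ)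
    (T : SigmaA N A → Measure K) : SigmaA N A → Measure K :=
  fun γ => ∑ i : Fin N, if h : A i (γ.val 0) = true then
      ENNReal.ofReal ((Jm i (prepend i γ h))⁻¹) •
        ((T (prepend i γ h)).map fun z => G (prepend i γ h, z))
    else 0

variable [BorelSpace K] [CompactSpace K] [Nonempty K]

/-- The fiberwise restriction `μ|_γ = π₂_* (φ₁(γ) μ_γ)` of a finite positive
measure `μ` on `Σ_A^+ × K`, where `({μ_γ}_γ, φ₁ m)` is the Rokhlin
disintegration of `μ` along the vertical fibers and `φ₁ = d(π₁_*μ)/dm`. -/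
noncomputable def fiberR (m : Measure (SigmaA N A))
    (μ : Measure (SigmaA N A × K)) (γ : SigmaA N A) : Measure K := by
  by_cases h : IsFiniteMeasure μ
  · haveI := h
    exact (μ.fst.rnDeriv m γ) • μ.condKernel γ
  · exact 0

/-- The norm `‖μ‖_∞ = ess sup_γ ‖μ|_γ‖_W` of a signed measure written as a
difference `μ = μ₁ - μ₂` of positive measures. -/
noncomputable def infNormPair (m : Measure (SigmaA N A))
    (μ₁ μ₂ : Measure (SigmaA N A × K)) : ℝ≥0∞ :=
  essSup (fun γ => wDist (fiberR m μ₁ γ) (fiberR m μ₂ γ)) m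

/-- The marginal density `φ₁ = d(π₁_*μ)/dm` of the signed measure `μ = μ₁ - μ₂`. -/
noncomputable def phiPair (m : Measure (SigmaA N A))
    (μ₁ μ₂ : Measure (SigmaA N A × K)) (γ : SigmaA N A) : ℝ :=
  (μ₁.fst.rnDeriv m γ).toReal - (μ₂.fst.rnDeriv m γ).toReal

/-- Membership in `AB`: both parts are finite with first marginal absolutely
continuous with respect to `m`. -/
def MemABPair (m : Measure (SigmaA N A)) (μ₁ μ₂ : Measure (SigmaA N A × K)) : Prop :=
  μ₁.fst ≪ m ∧ μ₂.fst ≪ m ∧ IsFiniteMeasure μ₁ ∧ IsFiniteMeasure μ₂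

/-- Membership in `S^∞`: `μ ∈ AB`, `‖μ‖_∞ < ∞` and the marginal density `φ₁`
has a `d_θ`-Lipschitz version. -/
def MemSPair (m : Measure (SigmaA N A)) (θ : ℝ)
    (μ₁ μ₂ : Measure (SigmaA N A × K)) : Prop :=
  MemABPair m μ₁ μ₂ ∧ infNormPair m μ₁ μ₂ < ⊤ ∧
    ∃ ψ : SigmaA N A → ℝ, ψ =ᵐ[m] phiPair m μ₁ μ₂ ∧ LipD (dTheta θ) ψ

/-- `‖φ₁‖_θ`, computed on the best version of the marginal density. -/
noncomputable def thetaNormMu (m : Measure (SigmaA N A)) (θ : ℝ)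
    (μ₁ μ₂ : Measure (SigmaA N A × K)) : ℝ≥0∞ :=
  ⨅ ψ : {ψ : SigmaA N A → ℝ // ψ =ᵐ[m] phiPair m μ₁ μ₂}, thetaNorm (dTheta θ) ψ.val

/-- The norm `‖μ‖_{S^∞} = ‖φ₁‖_θ + ‖μ‖_∞`. -/
noncomputable def sNormPair (m : Measure (SigmaA N A)) (θ : ℝ)
    (μ₁ μ₂ : Measure (SigmaA N A × K)) : ℝ≥0∞ :=
  thetaNormMu m θ μ₁ μ₂ + infNormPair m μ₁ μ₂

/-- Positive part of a signed measure. -/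
noncomputable def jPos {X : Type*} [MeasurableSpace X] (μ : SignedMeasure X) : Measure X :=
  μ.toJordanDecomposition.posPart

/-- Negative part of a signed measure. -/
noncomputable def jNeg {X : Type*} [MeasurableSpace X] (μ : SignedMeasure X) : Measure X :=
  μ.toJordanDecomposition.negPart

/-- Membership in `AB` for signed measures. -/
def MemAB (m : Measure (SigmaA N A)) (μ : SignedMeasure (SigmaA N A × K)) : Prop :=
  MemABPair m (jPos μ) (jNeg μ)

/-- Membership in `S^∞` for signed measures. -/
def MemS (m : Measure (SigmaA N A)) (θ : ℝ) (μ : SignedMeasure (SigmaA N A × K)) : Prop :=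
  MemSPair m θ (jPos μ) (jNeg μ)

/-- `‖μ‖_∞` for signed measures. -/
noncomputable def infNorm (m : Measure (SigmaA N A))
    (μ : SignedMeasure (SigmaA N A × K)) : ℝ≥0∞ :=
  infNormPair m (jPos μ) (jNeg μ)

/-- `‖μ‖_{S^∞}` for signed measures. -/
noncomputable def sNorm (m : Measure (SigmaA N A)) (θ : ℝ)
    (μ : SignedMeasure (SigmaA N A × K)) : ℝ≥0∞ :=
  sNormPair m θ (jPos μ) (jNeg μ)

/-- `‖φ₁‖_∞` of the marginal density of a signed measure. -/
noncomputable def phiSup (m : Measure (SigmaA N A))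
    (μ : SignedMeasure (SigmaA N A × K)) : ℝ≥0∞ :=
  essSup (fun γ => ENNReal.ofReal |phiPair m (jPos μ) (jNeg μ) γ|) m

theorem shift_measurable : Measurable (shift : SigmaA N A → SigmaA N A) := by
  unfold shift
  refine Measurable.subtype_mk ?_
  refine measurable_pi_lambda _ fun i => ?_
  exact (measurable_pi_apply (i + 1)).comp measurable_subtype_coe

theorem fiberR_eq (m : Measure (SigmaA N A)) (μ : Measure (SigmaA N A × K))
    [h : IsFiniteMeasure μ] (γ : SigmaA N A) :
    fiberR m μ γ = (μ.fst.rnDeriv m γ) • μ.condKernel γ := by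
  simp [fiberR, h]

theorem fiberR_integral (m : Measure (SigmaA N A)) (μ : Measure (SigmaA N A × K))
    [IsFiniteMeasure μ] (γ : SigmaA N A) (f : K → ℝ) :
    ∫ z, f z ∂(fiberR m μ γ) = (μ.fst.rnDeriv m γ).toReal • ∫ z, f z ∂(μ.condKernel γ) := by
  rw [fiberR_eq, integral_smul_measure]

theorem fiberR_finite (m : Measure (SigmaA N A)) [IsFiniteMeasure m]
    (μ : Measure (SigmaA N A × K)) [IsFiniteMeasure μ] :
    ∀ᵐ γ ∂m, IsFiniteMeasure (fiberR m μ γ) := by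
  filter_upwards [Measure.rnDeriv_lt_top μ.fst m] with γ hγ
  refine ⟨?_⟩
  rw [fiberR_eq]
  simp [hγ]

theorem fiberR_mass (m : Measure (SigmaA N A))
    (μ : Measure (SigmaA N A × K)) [IsFiniteMeasure μ] (γ : SigmaA N A) :
    (fiberR m μ γ).real Set.univ = (μ.fst.rnDeriv m γ).toReal := by
  rw [fiberR_eq]
  simp [Measure.real]

theorem fiberR_integrable (m : Measure (SigmaA N A)) [IsFiniteMeasure m]
    (μ : Measure (SigmaA N A × K)) [IsFiniteMeasure μ] (hac : μ.fst ≪ m)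
    (f : SigmaA N A × K → ℝ) (hf : Integrable f μ) :
    Integrable (fun γ => ∫ z, f (γ, z) ∂(fiberR m μ γ)) m := by
  simp_rw [fiberR_integral]
  exact (integrable_rnDeriv_smul_iff hac).2 hf.integral_condKernel

theorem fiberR_setIntegral (m : Measure (SigmaA N A)) [IsFiniteMeasure m]
    (μ : Measure (SigmaA N A × K)) [IsFiniteMeasure μ] (hac : μ.fst ≪ m)
    (f : SigmaA N A × K → ℝ) (hf : Integrable f μ) (E : Set (SigmaA N A))
    (hE : MeasurableSet E) :
    ∫ γ in E, ∫ z, f (γ, z) ∂(fiberR m μ γ) ∂m = ∫ p in E ×ˢ Set.univ, f p ∂μ := by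
  simp_rw [fiberR_integral]
  rw [setIntegral_rnDeriv_smul hac hE,
    Measure.setIntegral_condKernel_univ_right hE hf.integrableOn]

/-- a fibrewise contraction estimate -/
theorem fiber_bound (hdiam : Metric.diam (Set.univ : Set K) = 1)
    (α : ℝ) (hα0 : 0 < α) (u : K → K) (hu : ∀ z₁ z₂, dist (u z₁) (u z₂) ≤ α * dist z₁ z₂)
    (g : K → ℝ) (hg : LipschitzWith 1 g) (hg1 : ∀ z, |g z| ≤ 1)
    (ν₁ ν₂ : Measure K) [IsFiniteMeasure ν₁] [IsFiniteMeasure ν₂] (I : ℝ) (hI0 : 0 ≤ I)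
    (hI : wDist ν₁ ν₂ ≤ ENNReal.ofReal I) :
    ∫ z, g (u z) ∂ν₁ - ∫ z, g (u z) ∂ν₂ ≤
      α * I + |ν₁.real Set.univ - ν₂.real Set.univ| := by
  obtain ⟨z0⟩ := ‹Nonempty K›
  have hd : ∀ z w, |g (u z) - g (u w)| ≤ α * dist z w := fun z w => by
    have := hg.dist_le_mul (u z) (u w)
    rw [Real.dist_eq] at this
    have h2 := hu z w
    simp only [NNReal.coe_one, one_mul] at this
    linarith
  have hdist : ∀ z w : K, dist z w ≤ 1 := fun z w => by
    rw [← hdiam]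
    exact Metric.dist_le_diam_of_mem (isCompact_univ.isBounded) (Set.mem_univ _) (Set.mem_univ _)
  have hLip : LipschitzWith 1 (fun z => α⁻¹ * (g (u z) - g (u z0))) := by
    refine LipschitzWith.of_dist_le_mul fun z w => ?_
    rw [Real.dist_eq, ← mul_sub, abs_mul, abs_of_pos (inv_pos.2 hα0)]
    simp only [NNReal.coe_one, one_mul]
    rw [inv_mul_le_iff₀ hα0]
    simpa using hd z w
  have hB : ∀ z, |α⁻¹ * (g (u z) - g (u z0))| ≤ 1 := fun z => by
    rw [abs_mul, abs_of_pos (inv_pos.2 hα0), inv_mul_le_iff₀ hα0]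
    have := mul_le_mul_of_nonneg_left (hdist z z0) hα0.le
    linarith [hd z z0]
  have key := (le_iSup (fun g : {g : K → ℝ // LipschitzWith 1 g ∧ ∀ z, |g z| ≤ 1} =>
    ENNReal.ofReal |∫ z, g.val z ∂ν₁ - ∫ z, g.val z ∂ν₂|) ⟨_, hLip, hB⟩).trans hI
  rw [ENNReal.ofReal_le_ofReal_iff hI0] at key
  have hcont : Continuous fun z => g (u z) := by
    have : Continuous (fun z => α * (α⁻¹ * (g (u z) - g (u z0))) + g (u z0)) :=
      (continuous_const.mul hLip.continuous).add continuous_const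
    convert this using 2
    field_simp
    ring
  have hint : ∀ ν : Measure K, IsFiniteMeasure ν → Integrable (fun z => g (u z)) ν := fun ν _ =>
    Integrable.of_bound hcont.aestronglyMeasurable 1 (Filter.Eventually.of_forall fun z => hg1 _)
  have e : ∀ ν : Measure K, IsFiniteMeasure ν → ∫ z, α⁻¹ * (g (u z) - g (u z0)) ∂ν
      = α⁻¹ * (∫ z, g (u z) ∂ν - ν.real Set.univ * g (u z0)) := fun ν _ => by
    rw [integral_const_mul, integral_sub (hint ν ‹_›) (integrable_const _)]
    simp
  simp only [e ν₁ ‹_›, e ν₂ ‹_›] at key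
  rw [← mul_sub, abs_mul, abs_of_pos (inv_pos.2 hα0), inv_mul_le_iff₀ hα0] at key
  have k1 := (abs_le.1 key).2
  have k2 : (ν₁.real Set.univ - ν₂.real Set.univ) * g (u z0) ≤
      |ν₁.real Set.univ - ν₂.real Set.univ| := by
    refine (le_abs_self _).trans ?_
    rw [abs_mul]
    exact mul_le_of_le_one_right (abs_nonneg _) (hg1 _)
  linarith

/-- `‖·‖_∞` bound from a pointwise a.e. bound for each individual test function. -/
theorem infNormPair_le (m : Measure (SigmaA N A)) [IsFiniteMeasure m]
    (ν₁ ν₂ : Measure (SigmaA N A × K)) [IsFiniteMeasure ν₁] [IsFiniteMeasure ν₂] (M : ℝ)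
    (h : ∀ g : K → ℝ, LipschitzWith 1 g → (∀ z, |g z| ≤ 1) → ∀ᵐ γ ∂m,
      ∫ z, g z ∂(fiberR m ν₁ γ) - ∫ z, g z ∂(fiberR m ν₂ γ) ≤ M) :
    infNormPair m ν₁ ν₂ ≤ ENNReal.ofReal M := by
  obtain ⟨s, hs, hsd⟩ := TopologicalSpace.exists_countable_dense
    {g : C(K, ℝ) // LipschitzWith 1 g ∧ ∀ z, |g z| ≤ 1}
  have hall : ∀ᵐ γ ∂m, ∀ g ∈ s,
      |∫ z, g.1 z ∂(fiberR m ν₁ γ) - ∫ z, g.1 z ∂(fiberR m ν₂ γ)| ≤ M := by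
    rw [ae_ball_iff hs]
    intro g _
    have hneg : LipschitzWith 1 (fun z => - g.1 z) := g.2.1.neg
    filter_upwards [h g.1 g.2.1 g.2.2, h (fun z => - g.1 z) hneg
      (fun z => by rw [abs_neg]; exact g.2.2 z)] with γ h1 h2
    simp only [integral_neg] at h2
    exact abs_le.2 ⟨by linarith, h1⟩
  refine essSup_le_of_ae_le _ ?_
  filter_upwards [hall, fiberR_finite m ν₁, fiberR_finite m ν₂] with γ hγ hf1 hf2
  refine iSup_le fun g => ENNReal.ofReal_le_ofReal ?_
  have hcont : ∀ ν : Measure K, IsFiniteMeasure ν →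
      Continuous fun g : {g : C(K, ℝ) // LipschitzWith 1 g ∧ ∀ z, |g z| ≤ 1} => ∫ z, g.1 z ∂ν := by
    intro ν _
    refine continuous_of_dominated (bound := fun _ => 1) ?_ ?_ (integrable_const _) ?_
    · exact fun g => g.1.continuous.aestronglyMeasurable
    · exact fun g => Filter.Eventually.of_forall fun z => g.2.2 z
    · refine Filter.Eventually.of_forall fun z => ?_
      exact (continuous_eval_const (F := C(K, ℝ)) z).comp continuous_subtype_val
  have hcl : IsClosed {g : {g : C(K, ℝ) // LipschitzWith 1 g ∧ ∀ z, |g z| ≤ 1} |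
      |∫ z, g.1 z ∂(fiberR m ν₁ γ) - ∫ z, g.1 z ∂(fiberR m ν₂ γ)| ≤ M} :=
    isClosed_le (((hcont _ hf1).sub (hcont _ hf2)).abs) continuous_const
  have := hcl.closure_subset_iff.2 hγ (hsd ⟨⟨g.1, g.2.1.continuous⟩, g.2⟩)
  exact this

theorem infNormPair_step (m : Measure (SigmaA N A)) [IsProbabilityMeasure m]
    (hminv : m.map shift = m)
    (hdiam : Metric.diam (Set.univ : Set K) = 1)
    (G : SigmaA N A × K → K) (hGm : Measurable (skew G))
    (α : ℝ) (hα0 : 0 < α) (hG1 : CondG1 G α)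
    (μ₁ μ₂ ν₁ ν₂ : Measure (SigmaA N A × K))
    [IsFiniteMeasure μ₁] [IsFiniteMeasure μ₂] [IsFiniteMeasure ν₁] [IsFiniteMeasure ν₂]
    (hμ₁ : μ₁.fst ≪ m) (hμ₂ : μ₂.fst ≪ m) (hν₁ : ν₁.fst ≪ m) (hν₂ : ν₂.fst ≪ m)
    (heq : ν₁ + μ₂.map (skew G) = μ₁.map (skew G) + ν₂)
    (χ : SigmaA N A → ℝ) (hχ : χ =ᵐ[m] phiPair m μ₁ μ₂) :
    infNormPair m ν₁ ν₂ ≤ ENNReal.ofReal α * infNormPair m μ₁ μ₂ + supNormE χ := by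
  by_cases hI : infNormPair m μ₁ μ₂ = ⊤
  · rw [hI, ENNReal.mul_top (by simpa using hα0)]
    simp
  by_cases hC : supNormE χ = ⊤
  · rw [hC]; simp
  set I := (infNormPair m μ₁ μ₂).toReal with hIdef
  set C := (supNormE χ).toReal with hCdef
  have hI' : infNormPair m μ₁ μ₂ = ENNReal.ofReal I := (ENNReal.ofReal_toReal hI).symm
  have hC' : supNormE χ = ENNReal.ofReal C := (ENNReal.ofReal_toReal hC).symm
  have hI0 : 0 ≤ I := ENNReal.toReal_nonneg
  have hC0 : 0 ≤ C := ENNReal.toReal_nonneg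
  have hM : ENNReal.ofReal α * infNormPair m μ₁ μ₂ + supNormE χ = ENNReal.ofReal (α * I + C) := by
    rw [hI', hC', ← ENNReal.ofReal_mul hα0.le, ← ENNReal.ofReal_add (by positivity) hC0]
  rw [hM]
  refine infNormPair_le m ν₁ ν₂ _ fun g hg hg1 => ?_
  have hint : ∀ ρ : Measure (SigmaA N A × K), IsFiniteMeasure ρ →
      Integrable (fun p : SigmaA N A × K => g p.2) ρ := fun ρ _ =>
    Integrable.of_bound (hg.continuous.measurable.comp measurable_snd).aestronglyMeasurable 1
      (Filter.Eventually.of_forall fun z => hg1 _)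
  have hGm' : Measurable G := measurable_snd.comp hGm
  have hintG : ∀ ρ : Measure (SigmaA N A × K), IsFiniteMeasure ρ →
      Integrable (fun p : SigmaA N A × K => g (G p)) ρ := fun ρ _ =>
    Integrable.of_bound (hg.continuous.measurable.comp hGm').aestronglyMeasurable 1
      (Filter.Eventually.of_forall fun z => hg1 _)
  have i1 := fiberR_integrable m ν₁ hν₁ _ (hint ν₁ ‹_›)
  have i2 := fiberR_integrable m ν₂ hν₂ _ (hint ν₂ ‹_›)
  refine ae_le_of_forall_setIntegral_le (i1.sub i2) (integrable_const _) fun E hE _ => ?_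
  have j1 := fiberR_integrable m μ₁ hμ₁ _ (hintG μ₁ ‹_›)
  have j2 := fiberR_integrable m μ₂ hμ₂ _ (hintG μ₂ ‹_›)
  have hE' : MeasurableSet (shift ⁻¹' E) := shift_measurable hE
  have hpre : skew G ⁻¹' (E ×ˢ Set.univ) = (shift ⁻¹' E) ×ˢ Set.univ := by
    ext p; simp [skew]
  have hmapI : ∀ ρ : Measure (SigmaA N A × K), IsFiniteMeasure ρ →
      ∫ p in E ×ˢ Set.univ, g p.2 ∂(ρ.map (skew G)) =
        ∫ p in (shift ⁻¹' E) ×ˢ Set.univ, g (G p) ∂ρ := fun ρ _ => by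
    rw [setIntegral_map (f := fun p : SigmaA N A × K => g p.2) (hE.prod MeasurableSet.univ)
      ((hg.continuous.measurable.comp measurable_snd).aestronglyMeasurable) hGm.aemeasurable, hpre]
    rfl
  have hfin1 : IsFiniteMeasure (μ₁.map (skew G)) := inferInstance
  have hfin2 : IsFiniteMeasure (μ₂.map (skew G)) := inferInstance
  have hsum : ∫ p in E ×ˢ Set.univ, g p.2 ∂ν₁ + ∫ p in E ×ˢ Set.univ, g p.2 ∂(μ₂.map (skew G)) =
      ∫ p in E ×ˢ Set.univ, g p.2 ∂(μ₁.map (skew G)) + ∫ p in E ×ˢ Set.univ, g p.2 ∂ν₂ := by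
    rw [← integral_add_measure (hint _ ‹_›).integrableOn (hint _ hfin2).integrableOn,
      ← integral_add_measure (hint _ hfin1).integrableOn (hint _ ‹_›).integrableOn,
      ← Measure.restrict_add, ← Measure.restrict_add, heq]
  have hmE : m.real (shift ⁻¹' E) = m.real E := by
    conv_rhs => rw [← hminv]
    rw [map_measureReal_apply shift_measurable hE]
  have hbd : ∫ γ in shift ⁻¹' E, (∫ z, g (G (γ, z)) ∂(fiberR m μ₁ γ) -
      ∫ z, g (G (γ, z)) ∂(fiberR m μ₂ γ)) ∂m ≤ ∫ γ in shift ⁻¹' E, (α * I + C) ∂m := by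
    refine integral_mono_ae (j1.sub j2).integrableOn (integrable_const _) ?_
    refine ae_restrict_of_ae ?_
    filter_upwards [fiberR_finite m μ₁, fiberR_finite m μ₂, hχ,
      ae_le_essSup (μ := m) (fun γ => wDist (fiberR m μ₁ γ) (fiberR m μ₂ γ))]
      with γ f1 f2 hx hw
    have := fiber_bound hdiam α hα0 (fun z => G (γ, z)) (hG1 γ) g hg hg1 _ _ I hI0
      (hw.trans_eq hI')
    refine this.trans ?_
    rw [fiberR_mass, fiberR_mass]
    have hx' : |χ γ| ≤ C := by
      have := (le_iSup (fun x => ENNReal.ofReal |χ x|) γ).trans_eq hC'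
      exact (ENNReal.ofReal_le_ofReal_iff hC0).1 this
    rw [hx, phiPair] at hx'
    linarith
  change ∫ γ in E, (∫ z, g z ∂(fiberR m ν₁ γ) - ∫ z, g z ∂(fiberR m ν₂ γ)) ∂m ≤ _
  rw [integral_sub i1.integrableOn i2.integrableOn, fiberR_setIntegral m ν₁ hν₁ _ (hint _ ‹_›) E hE,
    fiberR_setIntegral m ν₂ hν₂ _ (hint _ ‹_›) E hE]
  rw [integral_sub j1.integrableOn j2.integrableOn,
    fiberR_setIntegral m μ₁ hμ₁ _ (hintG _ ‹_›) _ hE',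
    fiberR_setIntegral m μ₂ hμ₂ _ (hintG _ ‹_›) _ hE', ← hmapI _ ‹_›, ← hmapI _ ‹_›] at hbd
  simp only [integral_const, measureReal_restrict_apply_univ, hmE] at hbd ⊢
  linarith

theorem phiPair_integrable (m : Measure (SigmaA N A)) 
    (μ₁ μ₂ : Measure (SigmaA N A × K)) [IsFiniteMeasure μ₁] [IsFiniteMeasure μ₂] :
    Integrable (phiPair m μ₁ μ₂) m :=
  Measure.integrable_toReal_rnDeriv.sub Measure.integrable_toReal_rnDeriv

theorem phiPair_setIntegral (m : Measure (SigmaA N A)) [IsFiniteMeasure m]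
    (μ₁ μ₂ : Measure (SigmaA N A × K)) [IsFiniteMeasure μ₁] [IsFiniteMeasure μ₂]
    (hμ₁ : μ₁.fst ≪ m) (hμ₂ : μ₂.fst ≪ m) (E : Set (SigmaA N A)) :
    ∫ γ in E, phiPair m μ₁ μ₂ γ ∂m = μ₁.fst.real E - μ₂.fst.real E := by
  unfold phiPair
  rw [integral_sub Measure.integrable_toReal_rnDeriv.integrableOn
    Measure.integrable_toReal_rnDeriv.integrableOn,
    Measure.setIntegral_toReal_rnDeriv hμ₁, Measure.setIntegral_toReal_rnDeriv hμ₂]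

theorem phiPair_step (m : Measure (SigmaA N A)) [IsProbabilityMeasure m]
    (G : SigmaA N A × K → K) (hGm : Measurable (skew G))
    (Pσ : (SigmaA N A → ℝ) → SigmaA N A → ℝ) (hPF : IsPerronFrobenius m Pσ)
    (μ₁ μ₂ ν₁ ν₂ : Measure (SigmaA N A × K))
    [IsFiniteMeasure μ₁] [IsFiniteMeasure μ₂] [IsFiniteMeasure ν₁] [IsFiniteMeasure ν₂]
    (hμ₁ : μ₁.fst ≪ m) (hμ₂ : μ₂.fst ≪ m) (hν₁ : ν₁.fst ≪ m) (hν₂ : ν₂.fst ≪ m)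
    (heq : ν₁ + μ₂.map (skew G) = μ₁.map (skew G) + ν₂)
    (χ : SigmaA N A → ℝ) (hχ : χ =ᵐ[m] phiPair m μ₁ μ₂) (hPi : Integrable (Pσ χ) m) :
    Pσ χ =ᵐ[m] phiPair m ν₁ ν₂ := by
  have hχi : Integrable χ m := (phiPair_integrable m μ₁ μ₂).congr hχ.symm
  refine Integrable.ae_eq_of_forall_setIntegral_eq _ _ hPi (phiPair_integrable m ν₁ ν₂)
    fun E hE _ => ?_
  have hE' : MeasurableSet (shift ⁻¹' E) := shift_measurable hE
  have h1 := hPF χ (E.indicator 1) hχi (measurable_one.indicator hE)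
    ⟨1, fun x => by by_cases h : x ∈ E <;> simp [h]⟩
  have e1 : ∫ x, Pσ χ x * E.indicator 1 x ∂m = ∫ x in E, Pσ χ x ∂m := by
    rw [← integral_indicator hE]
    refine integral_congr_ae (Filter.Eventually.of_forall fun x => ?_)
    by_cases h : x ∈ E <;> simp [h]
  have e2 : ∫ x, χ x * E.indicator 1 (shift x) ∂m = ∫ x in shift ⁻¹' E, χ x ∂m := by
    rw [← integral_indicator hE']
    refine integral_congr_ae (Filter.Eventually.of_forall fun x => ?_)
    by_cases h : shift x ∈ E <;> simp [h]
  rw [e1, e2, integral_congr_ae (ae_restrict_of_ae hχ), phiPair_setIntegral m μ₁ μ₂ hμ₁ hμ₂] at h1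
  rw [h1, phiPair_setIntegral m ν₁ ν₂ hν₁ hν₂]
  have hpre : skew G ⁻¹' (Prod.fst ⁻¹' E) = Prod.fst ⁻¹' (shift ⁻¹' E) := by
    ext p; simp [skew]
  have hmp : ∀ ρ : Measure (SigmaA N A × K), IsFiniteMeasure ρ →
      (ρ.map (skew G)).real (Prod.fst ⁻¹' E) = ρ.fst.real (shift ⁻¹' E) := fun ρ _ => by
    rw [map_measureReal_apply hGm (measurable_fst hE), hpre, Measure.fst,
      map_measureReal_apply measurable_fst hE']
  have hfs : ∀ ρ : Measure (SigmaA N A × K), ρ.fst.real E = ρ.real (Prod.fst ⁻¹' E) := fun ρ => by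
    rw [Measure.fst, map_measureReal_apply measurable_fst hE]
  have : (ν₁ + μ₂.map (skew G)).real (Prod.fst ⁻¹' E) =
      (μ₁.map (skew G) + ν₂).real (Prod.fst ⁻¹' E) := by rw [heq]
  rw [measureReal_add_apply, measureReal_add_apply] at this
  rw [hmp _ ‹_›, hmp _ ‹_›] at this
  rw [hfs, hfs]
  linarith

instance jPos_finite {X : Type*} [MeasurableSpace X] (μ : SignedMeasure X) :
    IsFiniteMeasure (jPos μ) := μ.toJordanDecomposition.posPart_finite

instance jNeg_finite {X : Type*} [MeasurableSpace X] (μ : SignedMeasure X) :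
    IsFiniteMeasure (jNeg μ) := μ.toJordanDecomposition.negPart_finite

theorem signed_apply {X : Type*} [MeasurableSpace X] (μ : SignedMeasure X) (E : Set X)
    (hE : MeasurableSet E) : μ E = (jPos μ).real E - (jNeg μ).real E := by
  conv_lhs => rw [← μ.toSignedMeasure_toJordanDecomposition]
  rw [JordanDecomposition.toSignedMeasure, sub_apply,
    Measure.toSignedMeasure_apply_measurable hE, Measure.toSignedMeasure_apply_measurable hE]
  rfl

theorem jordan_map {X Y : Type*} [MeasurableSpace X] [MeasurableSpace Y]
    (μ : SignedMeasure X) (f : X → Y) (hf : Measurable f) :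
    jPos (μ.map f) + (jNeg μ).map f = (jPos μ).map f + jNeg (μ.map f) := by
  ext E hE
  rw [← measureReal_eq_measureReal_iff, measureReal_add_apply, measureReal_add_apply,
    map_measureReal_apply hf hE, map_measureReal_apply hf hE]
  have h1 := signed_apply (μ.map f) E hE
  rw [VectorMeasure.map_apply _ hf hE, signed_apply μ _ (hf hE)] at h1
  linarith

theorem jordan_le {X : Type*} [MeasurableSpace X] (ν : SignedMeasure X) (a b : Measure X)
    (h : jPos ν + b = a + jNeg ν) : (∀ E, jPos ν E ≤ a E) ∧ (∀ E, jNeg ν E ≤ b E) := by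
  obtain ⟨S, hS, h1, h2⟩ := ν.toJordanDecomposition.mutuallySingular
  change jPos ν S = 0 at h1
  change jNeg ν Sᶜ = 0 at h2
  have hh : ∀ E, jPos ν E + b E = a E + jNeg ν E := fun E => by
    rw [← Measure.add_apply, h, Measure.add_apply]
  constructor
  · intro E
    have h3 : jPos ν E ≤ jPos ν (E ∩ Sᶜ) := by
      rw [← measure_inter_add_sdiff E hS, measure_mono_null Set.inter_subset_right h1, zero_add,
        Set.sdiff_eq]
    have h4 := hh (E ∩ Sᶜ)
    rw [measure_mono_null Set.inter_subset_right h2, add_zero] at h4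
    exact h3.trans ((le_self_add.trans_eq h4).trans (measure_mono Set.inter_subset_left))
  · intro E
    have h3 : jNeg ν E ≤ jNeg ν (E ∩ S) := by
      rw [← measure_inter_add_sdiff E hS, Set.sdiff_eq,
        measure_mono_null (Set.inter_subset_right (s := E)) h2, add_zero]
    have h4 := hh (E ∩ S)
    rw [measure_mono_null Set.inter_subset_right h1, zero_add] at h4
    exact h3.trans ((le_add_self.trans_eq h4.symm).trans (measure_mono Set.inter_subset_left))

theorem fst_ac_step (m : Measure (SigmaA N A)) 
    (hminv : m.map shift = m) (G : SigmaA N A × K → K) (hGm : Measurable (skew G))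
    (μ ν : Measure (SigmaA N A × K)) (hμ : μ.fst ≪ m)
    (h : ∀ E, ν E ≤ μ.map (skew G) E) : ν.fst ≪ m := by
  refine Measure.AbsolutelyContinuous.mk fun E hE h0 => ?_
  have hE' : MeasurableSet (shift ⁻¹' E) := shift_measurable hE
  have hpre : skew G ⁻¹' (Prod.fst ⁻¹' E) = Prod.fst ⁻¹' (shift ⁻¹' E) := by
    ext p; simp [skew]
  rw [← hminv, Measure.map_apply shift_measurable hE] at h0
  have h1 := hμ h0
  rw [Measure.fst_apply hE', ← hpre] at h1
  rw [Measure.fst_apply hE]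
  refine le_antisymm ((h _).trans ?_) zero_le
  rw [Measure.map_apply hGm (measurable_fst hE), h1]

theorem dTheta_summable (θ : ℝ) (hθ0 : 0 < θ) (hθ1 : θ < 1) (x y : SigmaA N A) :
    Summable fun i : ℕ => θ ^ i * (if x.val i = y.val i then (0 : ℝ) else 1) := by
  refine Summable.of_nonneg_of_le (fun i => ?_) (fun i => ?_)
    (summable_geometric_of_lt_one hθ0.le hθ1)
  · split_ifs <;> positivity
  · have : 0 < θ ^ i := by positivity
    split_ifs <;> simp [this.le]

theorem dTheta_nonneg (θ : ℝ) (hθ0 : 0 < θ) (x y : SigmaA N A) : 0 ≤ dTheta θ x y := by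
  refine tsum_nonneg fun i => ?_
  split_ifs <;> positivity

theorem dTheta_pos (θ : ℝ) (hθ0 : 0 < θ) (hθ1 : θ < 1) (x y : SigmaA N A) (h : x ≠ y) :
    0 < dTheta θ x y := by
  have : ∃ i, x.val i ≠ y.val i := by
    by_contra! hc
    exact h (Subtype.ext (funext hc))
  obtain ⟨i, hi⟩ := this
  refine (dTheta_summable θ hθ0 hθ1 x y).tsum_pos (fun j => ?_) i ?_
  · split_ifs <;> positivity
  · simp [hi]; positivity

theorem lipD_of_thetaNorm (θ : ℝ) (hθ0 : 0 < θ) (hθ1 : θ < 1) (f : SigmaA N A → ℝ)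
    (h : thetaNorm (dTheta θ) f ≠ ⊤) : LipD (dTheta θ) f := by
  have hL : lipConst (dTheta θ) f ≠ ⊤ := fun h' => h (by simp [thetaNorm, h'])
  refine ⟨(lipConst (dTheta θ) f).toReal, fun x y => ?_⟩
  by_cases hxy : x = y
  · subst hxy
    simp only [sub_self, abs_zero]
    exact mul_nonneg ENNReal.toReal_nonneg (dTheta_nonneg θ hθ0 x x)
  have hd := dTheta_pos θ hθ0 hθ1 x y hxy
  rw [← div_le_iff₀ hd]
  rw [← ENNReal.ofReal_le_iff_le_toReal hL]
  exact le_iSup₂ (f := fun x y => ENNReal.ofReal (|f x - f y| / dTheta θ x y)) x y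

theorem lipD_continuous (θ : ℝ) (hθ0 : 0 < θ) (hθ1 : θ < 1) (f : SigmaA N A → ℝ)
    (h : LipD (dTheta θ) f) : Continuous f := by
  obtain ⟨L, hL⟩ := h
  rw [continuous_iff_continuousAt]
  intro x
  have hc : Continuous fun y => dTheta θ y x := by
    unfold dTheta
    refine continuous_tsum (u := fun i => θ ^ i) (fun i => ?_)
      (summable_geometric_of_lt_one hθ0.le hθ1) (fun i y => ?_)
    · have h1 : Continuous fun y : SigmaA N A => y.val i :=
        (continuous_apply i).comp continuous_subtype_val
      exact (continuous_of_discreteTopology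
        (f := fun a : Fin N => θ ^ i * (if a = x.val i then (0 : ℝ) else 1))).comp h1
    · have : 0 < θ ^ i := by positivity
      split_ifs <;> simp [this.le, abs_of_pos hθ0]
  have h0 : dTheta θ x x = 0 := by simp [dTheta]
  rw [ContinuousAt, tendsto_iff_dist_tendsto_zero]
  have hlim : Filter.Tendsto (fun y => L * dTheta θ y x) (nhds x) (nhds 0) := by
    have := (continuous_const.mul hc).tendsto (f := fun y => L * dTheta θ y x) x
    simpa [h0] using this
  exact squeeze_zero (fun _ => dist_nonneg) (fun y => by rw [Real.dist_eq]; exact hL y x) hlim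

theorem lipD_integrable (m : Measure (SigmaA N A)) [IsFiniteMeasure m]
    (θ : ℝ) (hθ0 : 0 < θ) (hθ1 : θ < 1) (f : SigmaA N A → ℝ)
    (h : thetaNorm (dTheta θ) f ≠ ⊤) : Integrable f m := by
  have hc := lipD_continuous θ hθ0 hθ1 f (lipD_of_thetaNorm θ hθ0 hθ1 f h)
  have hS : supNormE f ≠ ⊤ := fun h' => h (by simp [thetaNorm, h'])
  refine Integrable.of_bound hc.measurable.aestronglyMeasurable (supNormE f).toReal
    (Filter.Eventually.of_forall fun x => ?_)
  rw [Real.norm_eq_abs, ← ENNReal.ofReal_le_iff_le_toReal hS]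
  exact le_iSup (fun x => ENNReal.ofReal |f x|) x

/-- The recursively defined sum `Σ_{i<n} α^(n-1-i) r^i`. -/
noncomputable def recSum (α r : ℝ) : ℕ → ℝ
  | 0 => 0
  | n + 1 => α * recSum α r n + r ^ n

theorem recSum_nonneg (α r : ℝ) (hα0 : 0 < α) (hr0 : 0 < r) (n : ℕ) : 0 ≤ recSum α r n := by
  induction n with
  | zero => simp [recSum]
  | succ n ih => simp only [recSum]; positivity

theorem recSum_le (α r β : ℝ) (hα0 : 0 < α) (hr0 : 0 < r) (hβ0 : 0 < β) (hβ1 : β < 1)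
    (hα : α ≤ β ^ 2) (hr : r ≤ β ^ 2) (n : ℕ) :
    recSum α r (n + 1) ≤ β ^ n * ∑ i ∈ Finset.range (n + 1), α ^ i := by
  induction n with
  | zero => simp [recSum]
  | succ n ih =>
    rw [recSum, Finset.sum_range_succ', ]
    have hαβ : α ≤ β := hα.trans (by nlinarith)
    set B := ∑ i ∈ Finset.range (n + 1), α ^ i with hB
    have e : ∑ i ∈ Finset.range (n + 1), α ^ (i + 1) = α * B := by
      rw [hB, Finset.mul_sum]
      exact Finset.sum_congr rfl fun i _ => by ring
    have hBβ : B ≤ ∑ i ∈ Finset.range (n + 1), β ^ i :=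
      Finset.sum_le_sum fun i _ => pow_le_pow_left₀ hα0.le hαβ i
    have hgeo : (1 - β) * ∑ i ∈ Finset.range (n + 1), β ^ i = 1 - β ^ (n + 1) :=
      mul_neg_geom_sum β (n + 1)
    have hB0 : 0 ≤ B := Finset.sum_nonneg fun i _ => by positivity
    have h1 : α * B * (1 - β) ≤ β * (1 - β ^ (n + 1)) := by
      rw [← hgeo]
      have : α * B ≤ β * ∑ i ∈ Finset.range (n + 1), β ^ i := by gcongr
      nlinarith
    have h2 : r ^ (n + 1) ≤ (β ^ 2) ^ (n + 1) := pow_le_pow_left₀ hr0.le hr _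
    have h3 : α * recSum α r (n + 1) ≤ α * (β ^ n * B) := by gcongr
    have h4 : β ^ n * (α * B * (1 - β)) ≤ β ^ n * (β * (1 - β ^ (n + 1))) := by gcongr
    rw [e]
    have h5 : (β ^ 2) ^ (n + 1) = β ^ n * β * β ^ (n + 1) := by ring
    have h6 : β ^ (n + 1) * (α * B + α ^ 0) = β ^ n * β * (α * B) + β ^ n * β := by ring
    rw [h6]
    nlinarith

theorem recSum_le' (α r : ℝ) (hα0 : 0 < α) (hα1 : α < 1) (hr0 : 0 < r) (hr1 : r < 1) (n : ℕ) :
    recSum α r (n + 1) ≤ max (Real.sqrt α) (Real.sqrt r) ^ n / (1 - α) ∧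
      α ^ (n + 1) ≤ max (Real.sqrt α) (Real.sqrt r) ^ n := by
  set β := max (Real.sqrt α) (Real.sqrt r) with hβ
  have hβ0 : 0 < β := lt_max_of_lt_left (Real.sqrt_pos.2 hα0)
  have hβ1 : β < 1 := by
    refine max_lt ?_ ?_
    · rw [Real.sqrt_lt' one_pos]; simpa using hα1
    · rw [Real.sqrt_lt' one_pos]; simpa using hr1
  have hα : α ≤ β ^ 2 := by
    rw [← Real.sq_sqrt hα0.le]
    exact pow_le_pow_left₀ (Real.sqrt_nonneg _) (le_max_left _ _) 2
  have hr : r ≤ β ^ 2 := by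
    rw [← Real.sq_sqrt hr0.le]
    exact pow_le_pow_left₀ (Real.sqrt_nonneg _) (le_max_right _ _) 2
  have hαβ : α ≤ β := hα.trans (by nlinarith)
  constructor
  · refine (recSum_le α r β hα0 hr0 hβ0 hβ1 hα hr n).trans ?_
    rw [div_eq_mul_inv]
    refine mul_le_mul_of_nonneg_left ?_ (by positivity)
    have hgeo : (1 - α) * ∑ i ∈ Finset.range (n + 1), α ^ i = 1 - α ^ (n + 1) :=
      mul_neg_geom_sum α (n + 1)
    rw [← one_div, le_div_iff₀ (by linarith), mul_comm, hgeo]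
    have : 0 < α ^ (n + 1) := by positivity
    linarith
  · calc α ^ (n + 1) ≤ α ^ n := pow_le_pow_of_le_one hα0.le hα1.le (Nat.le_succ n)
      _ ≤ β ^ n := pow_le_pow_left₀ hα0.le hαβ n

/-- **Exponential convergence to equilibrium.**
With `β₁ = max{√α, √r}` and `D₂ = (1 + D/(1-α))/β₁`, for every
`μ ∈ V = {μ ∈ S^∞ : ∫ φ₁ dm = 0}` and every `n ≥ 1`,
`‖F^{*n}μ‖_∞ ≤ D₂ β₁^n ‖μ‖_{S^∞}`. -/
theorem transfer_convergence_to_equilibrium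
    (N : ℕ) (A : Fin N → Fin N → Bool) (hA : Aperiodic A)
    (θ : ℝ) (hθ0 : 0 < θ) (hθ1 : θ < 1)
    (m : Measure (SigmaA N A)) [IsProbabilityMeasure m]
    (hmM : IsMarkov m) (hminv : m.map shift = m)
    {K : Type*} [MetricSpace K] [CompactSpace K] [Nonempty K]
    [MeasurableSpace K] [BorelSpace K]
    (hdiam : Metric.diam (Set.univ : Set K) = 1)
    (G : SigmaA N A × K → K) (hGm : Measurable (skew G))
    (α : ℝ) (hα0 : 0 < α) (hα1 : α < 1) (hG1 : CondG1 G α)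
    (Pσ : (SigmaA N A → ℝ) → SigmaA N A → ℝ) (hPF : IsPerronFrobenius m Pσ)
    (D r : ℝ) (hD : 0 < D) (hr0 : 0 < r) (hr1 : r < 1)
    (hgap : HasGap m θ Pσ D r) :
    ∀ μ : SignedMeasure (SigmaA N A × K), MemS m θ μ →
      (∫ γ, phiPair m (jPos μ) (jNeg μ) γ ∂m) = 0 →
      ∀ n : ℕ, 1 ≤ n →
        infNorm m ((transfer G)^[n] μ) ≤
          ENNReal.ofReal
            ((1 + D / (1 - α)) / max (Real.sqrt α) (Real.sqrt r) *
              max (Real.sqrt α) (Real.sqrt r) ^ n) * sNorm m θ μ := by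
  intro μ hμ hmean n hn
  obtain ⟨⟨hac1, hac2, -, -⟩, -, -⟩ := hμ
  set β := max (Real.sqrt α) (Real.sqrt r) with hβ
  have hβ0 : 0 < β := lt_max_of_lt_left (Real.sqrt_pos.2 hα0)
  have h1α : 0 < 1 - α := by linarith
  have hDα : 0 < D / (1 - α) := div_pos hD h1α
  have hcpos : 0 < (1 + D / (1 - α)) / β * β ^ n := by positivity
  rw [sNorm, sNormPair, thetaNormMu, ENNReal.iInf_add,
    ENNReal.mul_iInf_of_ne (by simpa using hcpos) ENNReal.ofReal_ne_top]
  refine le_iInf fun ψ => ?_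
  obtain ⟨ψ, hψ⟩ := ψ
  change _ ≤ _ * (thetaNorm (dTheta θ) ψ + infNormPair m (jPos μ) (jNeg μ))
  by_cases hT : thetaNorm (dTheta θ) ψ = ⊤
  · rw [hT, top_add, ENNReal.mul_top (by simpa using hcpos)]
    exact le_top
  have hψL := lipD_of_thetaNorm θ hθ0 hθ1 ψ hT
  have hψ0 : ∫ x, ψ x ∂m = 0 := by rw [integral_congr_ae hψ, hmean]
  have hgapψ := hgap ψ hψL hψ0
  have hfinψ : ∀ k, thetaNorm (dTheta θ) (Pσ^[k] ψ) ≠ ⊤ := fun k =>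
    ne_top_of_le_ne_top (ENNReal.mul_ne_top ENNReal.ofReal_ne_top hT) (hgapψ k)
  set T := thetaNorm (dTheta θ) ψ with hTdef
  set I := infNormPair m (jPos μ) (jNeg μ) with hIdef
  have main : ∀ k : ℕ,
      (jPos ((transfer G)^[k] μ)).fst ≪ m ∧ (jNeg ((transfer G)^[k] μ)).fst ≪ m ∧
      Pσ^[k] ψ =ᵐ[m] phiPair m (jPos ((transfer G)^[k] μ)) (jNeg ((transfer G)^[k] μ)) ∧
      infNormPair m (jPos ((transfer G)^[k] μ)) (jNeg ((transfer G)^[k] μ)) ≤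
        ENNReal.ofReal (α ^ k) * I + ENNReal.ofReal (D * recSum α r k) * T := by
    intro k
    induction k with
    | zero => exact ⟨hac1, hac2, hψ, by simp [recSum, hIdef]⟩
    | succ k ih =>
      obtain ⟨h1, h2, h3, h4⟩ := ih
      rw [Function.iterate_succ_apply', Function.iterate_succ_apply']
      set ρ := (transfer G)^[k] μ with hρ
      have heq := jordan_map ρ (skew G) hGm
      change jPos (transfer G ρ) + _ = _ + jNeg (transfer G ρ) at heq
      obtain ⟨hle1, hle2⟩ := jordan_le (transfer G ρ) _ _ heq
      have a1 := fst_ac_step m hminv G hGm _ _ h1 hle1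
      have a2 := fst_ac_step m hminv G hGm _ _ h2 hle2
      refine ⟨a1, a2, ?_, ?_⟩
      · refine phiPair_step m G hGm Pσ hPF _ _ _ _ h1 h2 a1 a2 heq _ h3 ?_
        have := hfinψ (k + 1)
        rw [Function.iterate_succ_apply'] at this
        exact lipD_integrable m θ hθ0 hθ1 _ this
      · refine (infNormPair_step m hminv hdiam G hGm α hα0 hG1 _ _ _ _ h1 h2 a1 a2 heq _ h3).trans ?_
        have hs : supNormE (Pσ^[k] ψ) ≤ ENNReal.ofReal (D * r ^ k) * T :=
          le_self_add.trans (hgapψ k)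
        have hrs := recSum_nonneg α r hα0 hr0 k
        calc _ ≤ ENNReal.ofReal α * (ENNReal.ofReal (α ^ k) * I +
              ENNReal.ofReal (D * recSum α r k) * T) + ENNReal.ofReal (D * r ^ k) * T := by gcongr
          _ = _ := by
            have e1 : ENNReal.ofReal (α ^ (k + 1)) =
                ENNReal.ofReal α * ENNReal.ofReal (α ^ k) := by
              rw [← ENNReal.ofReal_mul hα0.le, pow_succ']
            have e2 : ENNReal.ofReal (D * recSum α r (k + 1)) =
                ENNReal.ofReal α * ENNReal.ofReal (D * recSum α r k) +
                  ENNReal.ofReal (D * r ^ k) := by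
              rw [← ENNReal.ofReal_mul hα0.le, ← ENNReal.ofReal_add (by positivity) (by positivity)]
              congr 1
              simp only [recSum]
              ring
            rw [e1, e2]
            ring
  obtain ⟨j, rfl⟩ : ∃ j, n = j + 1 := ⟨n - 1, by omega⟩
  obtain ⟨r1, r2⟩ := recSum_le' α r hα0 hα1 hr0 hr1 j
  rw [← hβ] at r1 r2
  have hc : (1 + D / (1 - α)) / β * β ^ (j + 1) = β ^ j + D * (β ^ j / (1 - α)) := by
    field_simp
    ring
  have hbj : 0 < β ^ j := by positivity
  refine (main (j + 1)).2.2.2.trans ?_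
  rw [hc, mul_add, add_comm]
  have hq : 0 ≤ D * (β ^ j / (1 - α)) := by positivity
  gcongr
  · have := mul_le_mul_of_nonneg_left r1 hD.le
    linarith
  · linarith

end RDS
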